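/- Let n ≥ 1, 1 < p < ∞, 0 < s < 1, α ≥ 0 and let Ω ⊆ ℍⁿ₊ be an open set. If f ∈ W^{s,p,α}_{loc(x₁)}(ℍⁿ₊) ∩ L^{p−1}_{sp,α}(ℍⁿ) and φ ∈ W^{s,p,α}(ℍⁿ) has compact support contained in Ω, then ∫_{ℍⁿ} ∫_{ℍⁿ} |f(ξ)−f(ξ')|^{p−1} |φ(ξ)−φ(ξ')| / (d(ξ⁻¹∘ξ')^{Q+sp} |z−z'|^α) dξ' dξ < ∞. -/

import Mathlib

/-! Let `K = tsupport φ`. Being compact in the open half-space, `K` lies in a strip `D` at positive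
distance (in the `x₁` direction) from the complement of `D`. The pairs `(ξ, ξ')` split into three
kinds.

* Both points in `D`: `a ^ (p-1) * b ≤ a ^ p + b ^ p` bounds the integrand by the integrands of the
  seminorm of `f` on `D` and of the seminorm of `φ` on `ℍⁿ`.
* Neither point in `K`: the integrand vanishes.
* One point `ξ` in `K`, the other point `ξ'` outside `D`: then `|z - z'|` is bounded below, and the
  quasi-triangle inequality for the gauge bounds the kernel by a constant times
  `w ξ' = 1 / ((1 + d ξ') ^ (Q+sp) * (1 + |z'|) ^ α)` (`kernel_le`). Since
  `|f ξ - f ξ'| ^ (p-1) ≤ 2 ^ (p-1) * (|f ξ| ^ (p-1) + |f ξ'| ^ (p-1))`, the integrand is dominated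
  by a sum of two functions of product form `u ξ * v ξ'`, whose factors are all integrable: `w`
  because `(1 + d) ^ (-(Q+sp))` is, `|f| ^ (p-1) * w` by the tail assumption on `f`, and
  `|f| ^ (p-1) * |φ|` and `|φ|` because `f` and `φ` are in `L^p` near `K`.

Adding the majorants for both orders of `(ξ, ξ')` gives one pointwise bound (`pointwise_bound`),
which is then integrated term by term. -/


open MeasureTheory Real Filter Topology ENNReal

noncomputable section

/-- The Heisenberg group `ℍⁿ` as `ℝⁿ × ℝⁿ × ℝ`. -/
abbrev Heis (n : ℕ) : Type := (Fin n → ℝ) × (Fin n → ℝ) × ℝ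

/-- Group law `ξ ∘ ξ' = (x+x', y+y', t+t'+2⟨y,x'⟩−2⟨x,y'⟩)`. -/
def Hmul {n : ℕ} (a b : Heis n) : Heis n :=
  (a.1 + b.1, a.2.1 + b.2.1,
    a.2.2 + b.2.2 + 2 * (∑ i, a.2.1 i * b.1 i) - 2 * (∑ i, a.1 i * b.2.1 i))

/-- Group inverse `ξ⁻¹ = −ξ`. -/
def Hinv {n : ℕ} (a : Heis n) : Heis n := (-a.1, -a.2.1, -a.2.2)

/-- Squared Euclidean norm of the horizontal part `z = (x,y) ∈ ℝ^{2n}`. -/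
def zsq {n : ℕ} (a : Heis n) : ℝ := (∑ i, (a.1 i) ^ 2) + (∑ i, (a.2.1 i) ^ 2)

/-- Euclidean norm `|z|` of the horizontal part. -/
def znorm {n : ℕ} (a : Heis n) : ℝ := Real.sqrt (zsq a)

/-- The Koranyi–Folland gauge `d(ξ) = (|z|⁴ + t²)^{1/4}`. -/
def hd {n : ℕ} (a : Heis n) : ℝ := ((zsq a) ^ 2 + (a.2.2) ^ 2) ^ ((1 : ℝ) / 4)

/-- Homogeneous dimension `Q = 2n + 2` (as a real number). -/
def hQ (n : ℕ) : ℝ := 2 * n + 2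

/-- First coordinate `x₁` of a point of `ℍⁿ`. -/
def x1 {n : ℕ} (a : Heis n) : ℝ := if h : 0 < n then a.1 ⟨0, h⟩ else 0

/-- The half-space `ℍⁿ₊ = {ξ : x₁ > 0}`. -/
def halfSpace (n : ℕ) : Set (Heis n) := {a | 0 < x1 a}

/-- Euclidean distance `|z - z'|` of the horizontal parts. -/
def zdist {n : ℕ} (a b : Heis n) : ℝ := znorm (Hmul (Hinv a) b)

/-- `J_p(t) = |t|^{p-2} t`. -/
def Jp (p t : ℝ) : ℝ := |t| ^ (p - 2) * t

/-- The Gagliardo-type seminorm (to the `p`-th power)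
`[f]_{s,p,α,Ω}^p = ∫_Ω ∫_Ω |f(ξ)-f(ξ')|^p / (d(ξ⁻¹∘ξ')^{Q+sp} |z-z'|^α)`. -/
def gagSem {n : ℕ} (p s α : ℝ) (Ω : Set (Heis n)) (f : Heis n → ℝ) : ℝ≥0∞ :=
  ∫⁻ ξ in Ω, ∫⁻ ξ' in Ω, ENNReal.ofReal
    (|f ξ - f ξ'| ^ p / (hd (Hmul (Hinv ξ) ξ') ^ (hQ n + s * p) * zdist ξ ξ' ^ α))

/-- The seminorm for `α = 0` (no horizontal weight). -/
def gagSem0 {n : ℕ} (p s : ℝ) (Ω : Set (Heis n)) (f : Heis n → ℝ) : ℝ≥0∞ :=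
  ∫⁻ ξ in Ω, ∫⁻ ξ' in Ω, ENNReal.ofReal
    (|f ξ - f ξ'| ^ p / hd (Hmul (Hinv ξ) ξ') ^ (hQ n + s * p))

/-- The strip `𝒟_{r,R} = {ξ : r < x₁ < R}`. -/
def strip (n : ℕ) (r R : ℝ) : Set (Heis n) := {ξ | r < x1 ξ ∧ x1 ξ < R}

/-- `f ∈ W^{s,p,α}_{loc(x₁)}(ℍⁿ₊)`. -/
def MemWlocx1 (n : ℕ) (p s α : ℝ) (f : Heis n → ℝ) : Prop :=
  Measurable f ∧ ∀ r R : ℝ, 0 < r → r < R →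
    (∫⁻ ξ in strip n r R, ENNReal.ofReal (|f ξ| ^ p)) < ⊤ ∧
    gagSem p s α (strip n r R) f < ⊤

/-- `f ∈ L^{p-1}_{sp,α}(ℍⁿ)`. -/
def MemLsp (n : ℕ) (p s α : ℝ) (f : Heis n → ℝ) : Prop :=
  Measurable f ∧
  (∀ K : Set (Heis n), IsCompact K →
    (∫⁻ ξ in K, ENNReal.ofReal (|f ξ| ^ (p - 1))) < ⊤) ∧
  (∫⁻ ξ, ENNReal.ofReal (|f ξ| ^ (p - 1) /
      ((1 + hd ξ) ^ (hQ n + s * p) * (1 + znorm ξ) ^ α))) < ⊤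

/-- `φ ∈ W^{s,p,α}(Ω)`. -/
def MemW (n : ℕ) (p s α : ℝ) (Ω : Set (Heis n)) (φ : Heis n → ℝ) : Prop :=
  Measurable φ ∧ (∫⁻ ξ in Ω, ENNReal.ofReal (|φ ξ| ^ p)) < ⊤ ∧ gagSem p s α Ω φ < ⊤

/-- `φ ∈ W^{s,p}(Ω)` (the case `α = 0`). -/
def MemW0 (n : ℕ) (p s : ℝ) (Ω : Set (Heis n)) (φ : Heis n → ℝ) : Prop :=
  Measurable φ ∧ (∫⁻ ξ in Ω, ENNReal.ofReal (|φ ξ| ^ p)) < ⊤ ∧ gagSem0 p s Ω φ < ⊤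

/-- `f ∈ W^{s,p}_{loc}(ℍⁿ₊)`. -/
def MemWloc0 (n : ℕ) (p s : ℝ) (f : Heis n → ℝ) : Prop :=
  Measurable f ∧ ∀ K : Set (Heis n), IsCompact K → K ⊆ halfSpace n →
    (∫⁻ ξ in K, ENNReal.ofReal (|f ξ| ^ p)) < ⊤ ∧ gagSem0 p s K f < ⊤

/-- `f ∈ L^{p-1}_{sp}(ℍⁿ)`. -/
def MemLsp0 (n : ℕ) (p s : ℝ) (f : Heis n → ℝ) : Prop :=
  Measurable f ∧
  (∀ K : Set (Heis n), IsCompact K →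
    (∫⁻ ξ in K, ENNReal.ofReal (|f ξ| ^ (p - 1))) < ⊤) ∧
  (∫⁻ ξ, ENNReal.ofReal (|f ξ| ^ (p - 1) / (1 + hd ξ) ^ (hQ n + s * p))) < ⊤

/-- Surface measure of the unit sphere `S^{m-1} ⊂ ℝ^m`: `|S^{m-1}| = 2π^{m/2}/Γ(m/2)`. -/
def sphereArea (m : ℕ) : ℝ := 2 * Real.pi ^ ((m : ℝ) / 2) / Real.Gamma ((m : ℝ) / 2)

/-- `ℐ(k,θ,α) = (∫₀^∞ (1+t²)^{-(k+2+θ)/4} dt) (∫₀^∞ r^{k-2}(1+r²)^{-(k+θ+α)/2} dr)`. -/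
def calI (k : ℕ) (θ α : ℝ) : ℝ :=
  (∫ t in Set.Ioi (0 : ℝ), (1 + t ^ 2) ^ (-(((k : ℝ) + 2 + θ) / 4))) *
  (∫ r in Set.Ioi (0 : ℝ), r ^ ((k : ℝ) - 2) * (1 + r ^ 2) ^ (-(((k : ℝ) + θ + α) / 2)))

/-- `Λ_{s,p,α} = 2∫₀¹ |1-τ^{(sp+α-1)/p}|^p/(1-τ)^{1+sp+α} dτ + 2/(sp+α)`. -/
def LamC (s p α : ℝ) : ℝ :=
  2 * (∫ τ in Set.Ioo (0 : ℝ) 1,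
      |1 - τ ^ ((s * p + α - 1) / p)| ^ p / (1 - τ) ^ (1 + s * p + α)) + 2 / (s * p + α)

/-- `u_β(τ) = τ^β` for `τ > 0`, extended by `0`. -/
def ubeta (β τ : ℝ) : ℝ := if 0 < τ then τ ^ β else 0

/-- `λ(β,s,p)`. -/
def lam (p s β : ℝ) : ℝ :=
  2 * (∫ τ in Set.Ioo (0 : ℝ) 1,
      Jp p (1 - τ ^ β) * (1 - τ ^ (s * p - 1 - β * (p - 1))) / (1 - τ) ^ (1 + s * p)) +
  2 / (s * p)

/-- `λ_ε(β,s,p)`. -/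
def lamEps (p s β ε : ℝ) : ℝ :=
  2 * (∫ τ in Set.Ioo (0 : ℝ) (1 / (1 + ε)), Jp p (1 - τ ^ β) / |1 - τ| ^ (1 + s * p)) +
  2 * (∫ τ in Set.Ioi (1 + ε), Jp p (1 - τ ^ β) / |1 - τ| ^ (1 + s * p)) +
  2 / (s * p)

/-- The box `D_{R₀}`. -/
def boxD (n : ℕ) (R₀ : ℝ) : Set (Heis n) :=
  {ξ | (∀ i, |ξ.1 i| ≤ R₀) ∧ (∀ i, |ξ.2.1 i| ≤ R₀) ∧ |ξ.2.2| ≤ R₀ ^ 2}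

/-- The box `D_{R₀,t}`. -/
def boxDt (n : ℕ) (R₀ : ℝ) : Set (Heis n) :=
  {ξ | (∀ i, |ξ.1 i| ≤ R₀) ∧ (∀ i, |ξ.2.1 i| ≤ R₀) ∧ |ξ.2.2| ≤ R₀ ^ 2 + R₀}

/-! ### The gauge -/

section gauge

variable {n : ℕ}

lemma le_of_sq_le {a b : ℝ} (h : a ^ 2 ≤ b ^ 2) (hb : 0 ≤ b) : a ≤ b :=
  (le_abs_self a).trans (abs_le_of_sq_le_sq h hb)

lemma zsq_nonneg' (a : Heis n) : 0 ≤ zsq a := by unfold zsq; positivity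

lemma hd_nonneg (a : Heis n) : 0 ≤ hd a := by unfold hd; positivity

lemma znorm_nonneg (a : Heis n) : 0 ≤ znorm a := Real.sqrt_nonneg _

lemma znorm_sq (a : Heis n) : znorm a ^ 2 = zsq a := Real.sq_sqrt (zsq_nonneg' a)

lemma hd_four (a : Heis n) : (hd a ^ 2) ^ 2 = zsq a ^ 2 + a.2.2 ^ 2 := by
  have h : 0 ≤ zsq a ^ 2 + a.2.2 ^ 2 := by positivity
  rw [← pow_mul]
  unfold hd
  rw [← Real.rpow_natCast, ← Real.rpow_mul h]
  norm_num

lemma zsq_le_hd (a : Heis n) : zsq a ≤ hd a ^ 2 := by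
  apply le_of_sq_le _ (by positivity)
  rw [hd_four]; nlinarith [sq_nonneg a.2.2]

lemma abs_t_le_hd (a : Heis n) : |a.2.2| ≤ hd a ^ 2 := by
  apply le_of_sq_le _ (by positivity)
  rw [hd_four, sq_abs]; nlinarith [sq_nonneg (zsq a)]

lemma hd_sq_le (a : Heis n) : hd a ^ 2 ≤ zsq a + |a.2.2| := by
  have h0 := zsq_nonneg' a
  apply le_of_sq_le _ (by positivity)
  rw [hd_four, ← sq_abs a.2.2]; nlinarith [abs_nonneg a.2.2]

lemma znorm_le_hd (a : Heis n) : znorm a ≤ hd a :=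
  le_of_sq_le (by rw [znorm_sq]; exact zsq_le_hd a) (hd_nonneg a)

lemma zsq_quasi (a b : Heis n) : zsq b ≤ 2 * zsq a + 2 * zsq (Hmul (Hinv a) b) := by
  simp only [zsq, Hmul, Hinv, Pi.add_apply, Pi.neg_apply]
  have h : ∀ u v : Fin n → ℝ,
      ∑ i, v i ^ 2 ≤ 2 * ∑ i, u i ^ 2 + 2 * ∑ i, (-u i + v i) ^ 2 := by
    intro u v
    rw [Finset.mul_sum, Finset.mul_sum, ← Finset.sum_add_distrib]
    exact Finset.sum_le_sum fun i _ => by nlinarith [sq_nonneg (v i - 2 * u i)]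
  linarith [h a.1 b.1, h a.2.1 b.2.1]

lemma abs_t_quasi (a b : Heis n) :
    |b.2.2| ≤ |(Hmul (Hinv a) b).2.2| + |a.2.2| + zsq a + zsq b := by
  have h : ∀ u v : Fin n → ℝ, 2 * |∑ i, u i * v i| ≤ ∑ i, u i ^ 2 + ∑ i, v i ^ 2 := by
    intro u v
    refine (mul_le_mul_of_nonneg_left (Finset.abs_sum_le_sum_abs _ _) zero_le_two).trans ?_
    rw [Finset.mul_sum, ← Finset.sum_add_distrib]
    refine Finset.sum_le_sum fun i _ => ?_
    rw [abs_mul, ← sq_abs (u i), ← sq_abs (v i)]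
    nlinarith [sq_nonneg (|u i| - |v i|)]
  have h1 := h a.2.1 b.1
  have h2 := h a.1 b.2.1
  simp only [zsq, Hmul, Hinv, Pi.neg_apply, neg_mul, Finset.sum_neg_distrib]
  set S := ∑ i, a.2.1 i * b.1 i
  set T := ∑ i, a.1 i * b.2.1 i
  have e : b.2.2 = (-a.2.2 + b.2.2 + 2 * -S - 2 * -T) + a.2.2 + 2 * S - 2 * T := by ring
  have h3 : |b.2.2| ≤ |-a.2.2 + b.2.2 + 2 * -S - 2 * -T| + |a.2.2| + 2 * |S| + 2 * |T| := by
    rw [abs_le]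
    have := abs_le.1 (le_refl |-a.2.2 + b.2.2 + 2 * -S - 2 * -T|)
    have := abs_le.1 (le_refl |a.2.2|)
    have := abs_le.1 (le_refl |S|)
    have := abs_le.1 (le_refl |T|)
    constructor <;> linarith
  linarith

/-- Quasi-triangle inequality for the gauge. -/
lemma hd_quasi (a b : Heis n) : hd b ≤ 3 * hd a + 3 * hd (Hmul (Hinv a) b) := by
  have h1 := hd_sq_le b
  have h2 := abs_t_quasi a b
  have h3 := zsq_quasi a b
  have h4 := zsq_le_hd a
  have h5 := zsq_le_hd (Hmul (Hinv a) b)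
  have h6 := abs_t_le_hd a
  have h7 := abs_t_le_hd (Hmul (Hinv a) b)
  have h8 := hd_nonneg a
  have h9 := hd_nonneg (Hmul (Hinv a) b)
  apply le_of_sq_le _ (by positivity)
  nlinarith [mul_nonneg h8 h9]

lemma znorm_quasi (a b : Heis n) : znorm b ≤ 2 * znorm a + 2 * zdist a b := by
  have h1 := zsq_quasi a b
  have h8 := znorm_nonneg a
  have h9 : 0 ≤ zdist a b := znorm_nonneg _
  have e : zdist a b ^ 2 = zsq (Hmul (Hinv a) b) := znorm_sq _
  apply le_of_sq_le _ (by positivity)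
  rw [← znorm_sq b, ← znorm_sq a, ← e] at h1
  nlinarith [mul_nonneg h8 h9]

lemma zsq_symm (a b : Heis n) : zsq (Hmul (Hinv a) b) = zsq (Hmul (Hinv b) a) := by
  simp only [zsq, Hmul, Hinv, Pi.add_apply, Pi.neg_apply]
  congr 1 <;> exact Finset.sum_congr rfl fun i _ => by ring

lemma zdist_symm (a b : Heis n) : zdist a b = zdist b a := by
  simp only [zdist, znorm, zsq_symm a b]

lemma hd_symm (a b : Heis n) : hd (Hmul (Hinv a) b) = hd (Hmul (Hinv b) a) := by
  unfold hd
  rw [zsq_symm a b]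
  congr 2
  simp only [Hmul, Hinv, Pi.neg_apply, neg_mul, Finset.sum_neg_distrib]
  rw [Finset.sum_congr rfl fun i _ => mul_comm (b.2.1 i) (a.1 i),
    Finset.sum_congr rfl fun i _ => mul_comm (b.1 i) (a.2.1 i)]
  ring

lemma abs_x1_le_zdist (a b : Heis n) : |x1 b - x1 a| ≤ zdist a b := by
  have h0 : 0 ≤ zdist a b := znorm_nonneg _
  refine le_of_sq_le ?_ h0
  rw [zdist, znorm_sq, sq_abs]
  unfold x1
  split_ifs with h
  · simp only [zsq, Hmul, Hinv, Pi.add_apply, Pi.neg_apply]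
    have h1 := Finset.single_le_sum (f := fun i => (-a.1 i + b.1 i) ^ 2)
      (fun i _ => sq_nonneg _) (Finset.mem_univ (⟨0, h⟩ : Fin n))
    have h2 : 0 ≤ ∑ i, (-a.2.1 i + b.2.1 i) ^ 2 := by positivity
    nlinarith
  · simpa using zsq_nonneg' _

lemma continuous_zsq : Continuous (zsq : Heis n → ℝ) := by unfold zsq; fun_prop

lemma continuous_znorm : Continuous (znorm : Heis n → ℝ) := continuous_zsq.sqrt

lemma continuous_hd : Continuous (hd : Heis n → ℝ) := by
  have := continuous_zsq (n := n)
  unfold hd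
  exact Continuous.rpow_const (by fun_prop) fun _ => Or.inr (by norm_num)

lemma continuous_x1 : Continuous (x1 : Heis n → ℝ) := by
  unfold x1
  split_ifs <;> fun_prop

lemma continuous_Hdiff : Continuous fun q : Heis n × Heis n => Hmul (Hinv q.1) q.2 := by
  unfold Hmul Hinv; dsimp only; fun_prop

lemma norm_le_znorm (a : Heis n) : ‖a.1‖ ≤ znorm a ∧ ‖a.2.1‖ ≤ znorm a := by
  constructor <;> refine (pi_norm_le_iff_of_nonneg (znorm_nonneg a)).2 fun i => ?_ <;>
    apply le_of_sq_le _ (znorm_nonneg a) <;>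
    rw [znorm_sq, Real.norm_eq_abs, sq_abs, zsq]
  · have h1 := Finset.single_le_sum (f := fun i => a.1 i ^ 2)
      (fun i _ => sq_nonneg _) (Finset.mem_univ i)
    have h2 : 0 ≤ ∑ i, a.2.1 i ^ 2 := by positivity
    linarith
  · have h1 := Finset.single_le_sum (f := fun i => a.2.1 i ^ 2)
      (fun i _ => sq_nonneg _) (Finset.mem_univ i)
    have h2 : 0 ≤ ∑ i, a.1 i ^ 2 := by positivity
    linarith

end gauge

/-! ### The kernel and the weight -/

section kernel

variable {n : ℕ}

/-- The reciprocal `d(ξ⁻¹∘ξ')^q |z-z'|^α` of the singular kernel; the exponent `q` stands for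
`Q + sp`. -/
def kern (q α : ℝ) (a b : Heis n) : ℝ := hd (Hmul (Hinv a) b) ^ q * zdist a b ^ α

/-- The reciprocal `(1+d(ξ))^q (1+|z|)^α` of the tail weight; the exponent `q` stands for
`Q + sp`. -/
def wden (q α : ℝ) (a : Heis n) : ℝ := (1 + hd a) ^ q * (1 + znorm a) ^ α

lemma kern_nonneg (q α : ℝ) (a b : Heis n) : 0 ≤ kern q α a b :=
  mul_nonneg (Real.rpow_nonneg (hd_nonneg _) _) (Real.rpow_nonneg (znorm_nonneg _) _)

lemma kern_symm (q α : ℝ) (a b : Heis n) : kern q α a b = kern q α b a := by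
  simp only [kern, hd_symm a b, zdist_symm a b]

lemma wden_pos (q α : ℝ) (a : Heis n) : 0 < wden q α a := by
  have := hd_nonneg a
  have := znorm_nonneg a
  unfold wden; positivity

lemma measurable_kern (q α : ℝ) :
    Measurable fun x : Heis n × Heis n => kern q α x.1 x.2 := by
  have h1 : Measurable fun x : Heis n × Heis n => hd (Hmul (Hinv x.1) x.2) :=
    (continuous_hd.comp continuous_Hdiff).measurable
  have h2 : Measurable fun x : Heis n × Heis n => zdist x.1 x.2 :=
    (continuous_znorm.comp continuous_Hdiff).measurable
  unfold kern
  fun_prop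

lemma measurable_wden (q α : ℝ) : Measurable (wden q α : Heis n → ℝ) := by
  have h1 := (continuous_hd (n := n)).measurable
  have h2 := (continuous_znorm (n := n)).measurable
  unfold wden
  fun_prop

/-- Away from the diagonal the singular kernel is controlled by the tail weight: if `a` stays in a
bounded set and the `x₁`-coordinates of `a` and `b` differ by at least `δ`, then
`1 / kern a b ≤ C / wden b`. -/
lemma kernel_le {q α M δ : ℝ} (hq : 0 ≤ q) (hα : 0 ≤ α) (hM : 0 ≤ M) (hδ : 0 < δ) :
    ∃ C : ℝ, 0 ≤ C ∧ ∀ a b : Heis n, hd a ≤ M → δ ≤ |x1 b - x1 a| →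
      (kern q α a b)⁻¹ ≤ C * (wden q α b)⁻¹ := by
  set c : ℝ := (1 + 3 * M) / δ + 3 with hc
  have hc0 : 0 < c := by positivity
  refine ⟨c ^ q * c ^ α, by positivity, fun a b ha hab => ?_⟩
  have hz : δ ≤ zdist a b := hab.trans (abs_x1_le_zdist a b)
  have hh : zdist a b ≤ hd (Hmul (Hinv a) b) := znorm_le_hd _
  have h1 : 1 + hd b ≤ c * hd (Hmul (Hinv a) b) := by
    have := hd_quasi a b
    have h2 : 1 + 3 * M ≤ (1 + 3 * M) / δ * hd (Hmul (Hinv a) b) := by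
      rw [div_mul_eq_mul_div, le_div_iff₀ hδ]
      exact mul_le_mul_of_nonneg_left (hz.trans hh) (by positivity)
    rw [hc, add_mul]; linarith
  have h3 : 1 + znorm b ≤ c * zdist a b := by
    have := znorm_quasi a b
    have := znorm_le_hd a
    have h2 : 1 + 3 * M ≤ (1 + 3 * M) / δ * zdist a b := by
      rw [div_mul_eq_mul_div, le_div_iff₀ hδ]
      exact mul_le_mul_of_nonneg_left hz (by positivity)
    rw [hc, add_mul]; linarith
  have hz0 : 0 < zdist a b := hδ.trans_le hz
  have hh0 := hz0.trans_le hh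
  have hb1 := hd_nonneg b
  have hb2 := znorm_nonneg b
  have hk : wden q α b ≤ c ^ q * c ^ α * kern q α a b := by
    have e1 : (1 + hd b) ^ q ≤ c ^ q * hd (Hmul (Hinv a) b) ^ q := by
      rw [← Real.mul_rpow hc0.le hh0.le]
      exact Real.rpow_le_rpow (by positivity) h1 hq
    have e2 : (1 + znorm b) ^ α ≤ c ^ α * zdist a b ^ α := by
      rw [← Real.mul_rpow hc0.le hz0.le]
      exact Real.rpow_le_rpow (by positivity) h3 hα
    calc wden q α b ≤ (c ^ q * hd (Hmul (Hinv a) b) ^ q) * (c ^ α * zdist a b ^ α) :=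
          mul_le_mul e1 e2 (by positivity) (by positivity)
      _ = _ := by unfold kern; ring
  have hkp : 0 < kern q α a b := by unfold kern; positivity
  have hw := wden_pos q α b
  rw [← div_eq_mul_inv, inv_eq_one_div, div_le_div_iff₀ hkp hw]
  linarith

/-- The tail weight is integrable: with `ε = (q - Q) / 4`, `(1+d)^q` dominates the product
`(1+‖x‖)^(n+ε) (1+‖y‖)^(n+ε) (1+|t|)^(1+ε)`. -/
lemma lintegral_weight (n : ℕ) {q α : ℝ} (hq : hQ n < q) (hα : 0 ≤ α) :
    ∫⁻ a : Heis n, ENNReal.ofReal (1 / wden q α a) < ⊤ := by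
  obtain ⟨ε, hε, rfl⟩ : ∃ ε : ℝ, 0 < ε ∧ q = hQ n + 4 * ε :=
    ⟨(q - hQ n) / 4, by linarith, by ring⟩
  have hx : Integrable fun x : Fin n → ℝ => (1 + ‖x‖) ^ (-((n : ℝ) + ε)) :=
    integrable_one_add_norm (by simp [hε])
  have ht : Integrable fun t : ℝ => (1 + ‖t‖) ^ (-((1 : ℝ) + ε)) :=
    integrable_one_add_norm (by simp [hε])
  have hI := hx.mul_prod (hx.mul_prod ht)
  refine (lintegral_mono fun a => ENNReal.ofReal_le_ofReal ?_).trans_lt hI.lintegral_lt_top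
  have hz := norm_le_znorm a
  have hh := znorm_le_hd a
  have h0 := znorm_nonneg a
  have h1 := hd_nonneg a
  have htt := abs_t_le_hd a
  rw [Real.rpow_neg (by positivity), Real.rpow_neg (by positivity), Real.rpow_neg (by positivity),
    ← mul_inv, ← mul_inv, one_div]
  refine inv_anti₀ (by positivity) ?_
  have e1 : (1 + ‖a.1‖) ^ ((n : ℝ) + ε) ≤ (1 + hd a) ^ ((n : ℝ) + ε) :=
    Real.rpow_le_rpow (by positivity) (by linarith) (by positivity)
  have e2 : (1 + ‖a.2.1‖) ^ ((n : ℝ) + ε) ≤ (1 + hd a) ^ ((n : ℝ) + ε) :=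
    Real.rpow_le_rpow (by positivity) (by linarith) (by positivity)
  have e3 : (1 + ‖a.2.2‖) ^ ((1 : ℝ) + ε) ≤ (1 + hd a) ^ (2 * ((1 : ℝ) + ε)) := by
    rw [Real.rpow_mul (by positivity)]
    refine Real.rpow_le_rpow (by positivity) ?_ (by positivity)
    rw [Real.rpow_two, Real.norm_eq_abs]; nlinarith
  have e4 : 1 ≤ (1 + znorm a) ^ α := Real.one_le_rpow (by linarith) hα
  calc _ ≤ (1 + hd a) ^ ((n : ℝ) + ε) * ((1 + hd a) ^ ((n : ℝ) + ε) *
          (1 + hd a) ^ (2 * ((1 : ℝ) + ε))) := by gcongr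
    _ = (1 + hd a) ^ (hQ n + 4 * ε) := by
      rw [← Real.rpow_add (by positivity), ← Real.rpow_add (by positivity)]
      congr 1; unfold hQ; ring
    _ ≤ wden (hQ n + 4 * ε) α a := le_mul_of_one_le_right (by positivity) e4

end kernel

/-! ### Elementary inequalities -/

lemma rpow_mul_le {p a b : ℝ} (hp : 1 < p) (ha : 0 ≤ a) (hb : 0 ≤ b) :
    a ^ (p - 1) * b ≤ a ^ p + b ^ p := by
  have key : ∀ c : ℝ, 0 ≤ c → c ^ (p - 1) * c = c ^ p := fun c hc => by
    rw [← Real.rpow_add_one' hc (by linarith)]; simp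
  rcases le_total a b with h | h
  · calc a ^ (p - 1) * b ≤ b ^ (p - 1) * b := by gcongr
      _ = b ^ p := key b hb
      _ ≤ _ := by linarith [Real.rpow_nonneg ha p]
  · calc a ^ (p - 1) * b ≤ a ^ (p - 1) * a := by gcongr
      _ = a ^ p := key a ha
      _ ≤ _ := by linarith [Real.rpow_nonneg hb p]

lemma abs_sub_rpow_le {r : ℝ} (hr : 0 < r) (a b : ℝ) :
    |a - b| ^ r ≤ 2 ^ r * (|a| ^ r + |b| ^ r) := by
  have h : ∀ c : ℝ, 0 ≤ |c| ^ r := fun c => by positivity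
  have h2 : |a - b| ≤ 2 * max |a| |b| := by
    have := abs_sub a b
    linarith [le_max_left |a| |b|, le_max_right |a| |b|]
  calc |a - b| ^ r ≤ (2 * max |a| |b|) ^ r := by gcongr
    _ = 2 ^ r * (max |a| |b|) ^ r := Real.mul_rpow (by norm_num) (by positivity)
    _ ≤ _ := by
      gcongr
      rcases max_cases |a| |b| with ⟨e, -⟩ | ⟨e, -⟩ <;> rw [e] <;> linarith [h a, h b]

/-! ### The pointwise bound and its integration -/

section bound

variable {n : ℕ}

/-- Off-diagonal estimate: `φ` vanishes at `b`, and the kernel at `(a, b)` is controlled by the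
tail weight at `b`. -/
lemma offdiag_bound {p q α C : ℝ} (hp : 1 < p) (f φ : Heis n → ℝ) (a b : Heis n)
    (hb : φ b = 0) (hC : (kern q α a b)⁻¹ ≤ C * (wden q α b)⁻¹) :
    |f a - f b| ^ (p - 1) * |φ a - φ b| / kern q α a b ≤
      2 ^ (p - 1) * C * (|f a| ^ (p - 1) * |φ a| * (1 / wden q α b) +
        |φ a| * (|f b| ^ (p - 1) / wden q α b)) := by
  have h1 := abs_sub_rpow_le (show 0 < p - 1 by linarith) (f a) (f b)
  rw [hb, sub_zero, div_eq_mul_inv]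
  have hk : 0 ≤ (kern q α a b)⁻¹ := inv_nonneg.2 (kern_nonneg _ _ _ _)
  calc _ ≤ 2 ^ (p - 1) * (|f a| ^ (p - 1) + |f b| ^ (p - 1)) * |φ a| *
          (C * (wden q α b)⁻¹) := by gcongr
    _ = _ := by ring

/-- The product-form majorant of the off-diagonal part. -/
def offMaj (p q α : ℝ) (f φ : Heis n → ℝ) (a b : Heis n) : ℝ≥0∞ :=
  ENNReal.ofReal (|f a| ^ (p - 1) * |φ a|) * ENNReal.ofReal (1 / wden q α b) +
    ENNReal.ofReal |φ a| * ENNReal.ofReal (|f b| ^ (p - 1) / wden q α b)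

lemma ofReal_offMaj (p q α : ℝ) (f φ : Heis n → ℝ) (a b : Heis n) :
    offMaj p q α f φ a b = ENNReal.ofReal (|f a| ^ (p - 1) * |φ a| * (1 / wden q α b) +
        |φ a| * (|f b| ^ (p - 1) / wden q α b)) := by
  have := wden_pos q α b
  rw [offMaj, ENNReal.ofReal_add (by positivity) (by positivity),
    ENNReal.ofReal_mul (p := |f a| ^ (p - 1) * |φ a|) (by positivity),
    ENNReal.ofReal_mul (p := |φ a|) (by positivity)]

lemma measurable_offMaj (p q α : ℝ) {f φ : Heis n → ℝ} (hf : Measurable f) (hφ : Measurable φ) :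
    Measurable fun x : Heis n × Heis n => offMaj p q α f φ x.1 x.2 := by
  have := measurable_wden (n := n) q α
  unfold offMaj
  fun_prop

lemma measurable_offMaj_swap (p q α : ℝ) {f φ : Heis n → ℝ} (hf : Measurable f)
    (hφ : Measurable φ) :
    Measurable fun x : Heis n × Heis n => offMaj p q α f φ x.2 x.1 := by
  have := measurable_wden (n := n) q α
  unfold offMaj
  fun_prop

/-- The integrand is dominated, for every pair of points, by the seminorm integrands plus the
off-diagonal majorant in both orders. -/
lemma pointwise_bound {p q α C : ℝ} (hp : 1 < p) (hC : 0 ≤ C) (f φ : Heis n → ℝ)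
    (K D : Set (Heis n)) (hKD : K ⊆ D) (hφK : ∀ a ∉ K, φ a = 0)
    (hker : ∀ a ∈ K, ∀ b ∉ D, (kern q α a b)⁻¹ ≤ C * (wden q α b)⁻¹) (a b : Heis n) :
    ENNReal.ofReal (|f a - f b| ^ (p - 1) * |φ a - φ b| / kern q α a b) ≤
      (D ×ˢ D).indicator
          (fun x => ENNReal.ofReal (|f x.1 - f x.2| ^ p / kern q α x.1 x.2)) (a, b) +
        ENNReal.ofReal (|φ a - φ b| ^ p / kern q α a b) +
        ENNReal.ofReal (2 ^ (p - 1) * C) *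
          (offMaj p q α f φ a b + offMaj p q α f φ b a) := by
  have h2C : 0 ≤ 2 ^ (p - 1) * C := by positivity
  by_cases hDD : a ∈ D ∧ b ∈ D
  · rw [Set.indicator_of_mem (Set.mk_mem_prod hDD.1 hDD.2)]
    refine le_trans ?_ le_self_add
    have hk := kern_nonneg q α a b
    rw [← ENNReal.ofReal_add (by positivity) (by positivity), ← add_div]
    exact ENNReal.ofReal_le_ofReal
      (div_le_div_of_nonneg_right (rpow_mul_le hp (abs_nonneg _) (abs_nonneg _)) hk)
  by_cases ha : a ∈ K
  · have hb : b ∉ D := fun hb => hDD ⟨hKD ha, hb⟩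
    refine le_trans ?_ le_add_self
    refine le_trans ?_ (mul_le_mul_right le_self_add _)
    rw [ofReal_offMaj, ← ENNReal.ofReal_mul h2C]
    exact ENNReal.ofReal_le_ofReal
      (offdiag_bound hp f φ a b (hφK b fun h => hb (hKD h)) (hker a ha b hb))
  by_cases hb : b ∈ K
  · have ha' : a ∉ D := fun ha' => hDD ⟨ha', hKD hb⟩
    refine le_trans ?_ le_add_self
    refine le_trans ?_ (mul_le_mul_right le_add_self _)
    rw [ofReal_offMaj, ← ENNReal.ofReal_mul h2C, abs_sub_comm (f a), abs_sub_comm (φ a), kern_symm]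
    exact ENNReal.ofReal_le_ofReal (offdiag_bound hp f φ b a (hφK a ha) (hker b hb a ha'))
  · simp [hφK a ha, hφK b hb]

lemma lintegral_prod_lt_top {X : Type*} [MeasurableSpace X] {μ : Measure X} {u v : X → ℝ≥0∞}
    (hu : Measurable u) (hv : Measurable v) (hu' : ∫⁻ a, u a ∂μ < ⊤) (hv' : ∫⁻ a, v a ∂μ < ⊤) :
    ∫⁻ a, ∫⁻ b, u a * v b ∂μ ∂μ < ⊤ := by
  simp_rw [lintegral_const_mul _ hv, lintegral_mul_const _ hu]
  exact ENNReal.mul_lt_top hu' hv'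

/-- `L^p` is contained in `L¹` for functions vanishing outside a set of finite measure. -/
lemma lintegral_abs_lt_top {X : Type*} [MeasurableSpace X] {μ : Measure X} {p : ℝ} (hp : 1 < p)
    {φ : X → ℝ} (hφm : Measurable φ) {K : Set X} (hKm : MeasurableSet K) (hK : μ K < ⊤)
    (hφK : ∀ a ∉ K, φ a = 0) (hφ : ∫⁻ a, ENNReal.ofReal (|φ a| ^ p) ∂μ < ⊤) :
    ∫⁻ a, ENNReal.ofReal |φ a| ∂μ < ⊤ := by
  calc ∫⁻ a, ENNReal.ofReal |φ a| ∂μ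
      ≤ ∫⁻ a, (K.indicator (fun _ => 1) a + ENNReal.ofReal (|φ a| ^ p)) ∂μ := by
        refine lintegral_mono fun a => ?_
        by_cases ha : a ∈ K
        · rw [Set.indicator_of_mem ha, ← ENNReal.ofReal_one,
            ← ENNReal.ofReal_add (by positivity) (by positivity)]
          refine ENNReal.ofReal_le_ofReal ?_
          have := rpow_mul_le hp (zero_le_one (α := ℝ)) (abs_nonneg (φ a))
          simpa using this
        · simp [hφK a ha]
    _ = μ K + ∫⁻ a, ENNReal.ofReal (|φ a| ^ p) ∂μ := by
        rw [lintegral_add_right _ (by fun_prop), lintegral_indicator hKm, setLIntegral_one]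
    _ < ⊤ := ENNReal.add_lt_top.2 ⟨hK, hφ⟩

end bound

/-- Lemma 2.1: well-posedness of the weak formulation. -/
theorem kernel_pairing_integrable (n : ℕ) (hn : 1 ≤ n) (p s α : ℝ)
    (hp1 : 1 < p) (hs0 : 0 < s) (hs1 : s < 1) (hα : 0 ≤ α)
    (Ω : Set (Heis n)) (hΩopen : IsOpen Ω) (hΩ : Ω ⊆ halfSpace n)
    (f φ : Heis n → ℝ)
    (hf1 : MemWlocx1 n p s α f) (hf2 : MemLsp n p s α f)
    (hφ : MemW n p s α Set.univ φ) (hφc : HasCompactSupport φ)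
    (hφΩ : tsupport φ ⊆ Ω) :
    (∫⁻ ξ, ∫⁻ ξ', ENNReal.ofReal
        (|f ξ - f ξ'| ^ (p - 1) * |φ ξ - φ ξ'| /
          (hd (Hmul (Hinv ξ) ξ') ^ (hQ n + s * p) * zdist ξ ξ' ^ α))) < ⊤ := by
  set q : ℝ := hQ n + s * p with hqdef
  have hsp : 0 < s * p := mul_pos hs0 (by linarith)
  have hQ0 : 0 ≤ hQ n := by unfold hQ; positivity
  have hq : 0 ≤ q := by linarith
  have hfm := hf1.1
  have hφm := hφ.1
  set K := tsupport φ with hK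
  have hKc : IsCompact K := hφc
  have hφK : ∀ a ∉ K, φ a = 0 := fun a ha => image_eq_zero_of_notMem_tsupport ha
  obtain ⟨δ₀, hδ₀, hlow⟩ := hKc.exists_forall_le' continuous_x1.continuousOn
    (a := 0) fun b hb => hΩ (hφΩ hb)
  obtain ⟨N₀, hN₀⟩ := hKc.bddAbove_image (f := x1) continuous_x1.continuousOn
  obtain ⟨M₀, hM₀⟩ := hKc.bddAbove_image (f := hd) continuous_hd.continuousOn
  have hup : ∀ a ∈ K, x1 a ≤ max N₀ 0 := fun a ha =>
    (hN₀ (Set.mem_image_of_mem _ ha)).trans (le_max_left _ _)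
  have hbd : ∀ a ∈ K, hd a ≤ max M₀ 0 := fun a ha =>
    (hM₀ (Set.mem_image_of_mem _ ha)).trans (le_max_left _ _)
  have hN : 0 ≤ max N₀ 0 := le_max_right _ _
  obtain ⟨C, hC, hker⟩ := kernel_le (n := n) hq hα (le_max_right M₀ 0) (half_pos hδ₀)
  -- `K` keeps `x₁`-distance at least `δ₀ / 2` from the complement of this strip.
  set D : Set (Heis n) := strip n (δ₀ / 2) (max N₀ 0 + δ₀) with hD
  have hKD : K ⊆ D := fun a ha => ⟨by linarith [hlow a ha], by linarith [hup a ha]⟩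
  have hker' : ∀ a ∈ K, ∀ b ∉ D, (kern q α a b)⁻¹ ≤ C * (wden q α b)⁻¹ := by
    intro a ha b hb
    refine hker a b (hbd a ha) ?_
    by_contra! hlt
    obtain ⟨h1, h2⟩ := abs_lt.1 hlt
    exact hb ⟨by linarith [hlow a ha], by linarith [hup a ha]⟩
  have hDm : MeasurableSet D :=
    (measurableSet_lt measurable_const continuous_x1.measurable).inter
      (measurableSet_lt continuous_x1.measurable measurable_const)
  obtain ⟨hfp, hfs⟩ := hf1.2 (δ₀ / 2) (max N₀ 0 + δ₀) (half_pos hδ₀) (by linarith)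
  have hwm := measurable_wden (n := n) q α
  have hkm := measurable_kern (n := n) q α
  -- The four factors of the off-diagonal majorant have finite integral.
  have IA : ∫⁻ a, ENNReal.ofReal (|f a| ^ (p - 1) * |φ a|) < ⊤ := by
    calc ∫⁻ a, ENNReal.ofReal (|f a| ^ (p - 1) * |φ a|)
        ≤ ∫⁻ a, (D.indicator (fun a => ENNReal.ofReal (|f a| ^ p)) a +
            ENNReal.ofReal (|φ a| ^ p)) := by
          refine lintegral_mono fun a => ?_
          by_cases ha : a ∈ K
          · rw [Set.indicator_of_mem (hKD ha),
              ← ENNReal.ofReal_add (by positivity) (by positivity)]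
            exact ENNReal.ofReal_le_ofReal (rpow_mul_le hp1 (abs_nonneg _) (abs_nonneg _))
          · simp [hφK a ha]
      _ = (∫⁻ a in D, ENNReal.ofReal (|f a| ^ p)) + ∫⁻ a, ENNReal.ofReal (|φ a| ^ p) := by
          rw [lintegral_add_right _ (by fun_prop), lintegral_indicator hDm]
      _ < ⊤ := ENNReal.add_lt_top.2 ⟨hfp, by simpa using hφ.2.1⟩
  have IB : ∫⁻ a, ENNReal.ofReal |φ a| < ⊤ :=
    lintegral_abs_lt_top hp1 hφm hKc.measurableSet hKc.measure_lt_top hφK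
      (by simpa using hφ.2.1)
  have IW := lintegral_weight n (q := q) (α := α) (by linarith) hα
  have IH : ∫⁻ a, ENNReal.ofReal (|f a| ^ (p - 1) / wden q α a) < ⊤ := hf2.2.2
  have hM := measurable_offMaj p q α hfm hφm
  have hM' : Measurable fun x : Heis n × Heis n => offMaj p q α f φ x.2 x.1 :=
    measurable_offMaj_swap p q α hfm hφm
  have IM : ∫⁻ a, ∫⁻ b, offMaj p q α f φ a b < ⊤ := by
    have m1 : Measurable fun a => ENNReal.ofReal (|f a| ^ (p - 1) * |φ a|) := by fun_prop
    have m2 : Measurable fun a : Heis n => ENNReal.ofReal (1 / wden q α a) := by fun_prop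
    have m3 : Measurable fun a => ENNReal.ofReal |φ a| := by fun_prop
    have m4 : Measurable fun a => ENNReal.ofReal (|f a| ^ (p - 1) / wden q α a) := by fun_prop
    have := ENNReal.add_lt_top.2
      ⟨lintegral_prod_lt_top m1 m2 IA IW, lintegral_prod_lt_top m3 m4 IB IH⟩
    rw [← lintegral_add_left] at this
    · refine lt_of_eq_of_lt (lintegral_congr fun a => ?_) this
      exact lintegral_add_left (m2.const_mul _) _
    · exact Measurable.lintegral_prod_right' (f := fun x : Heis n × Heis n =>
        ENNReal.ofReal (|f x.1| ^ (p - 1) * |φ x.1|) * ENNReal.ofReal (1 / wden q α x.2))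
        (by fun_prop)
  have IM' : ∫⁻ a, ∫⁻ b, offMaj p q α f φ b a < ⊤ := by
    rwa [lintegral_lintegral_swap hM'.aemeasurable]
  set T1 : Heis n × Heis n → ℝ≥0∞ := (D ×ˢ D).indicator
    fun x => ENNReal.ofReal (|f x.1 - f x.2| ^ p / kern q α x.1 x.2) with hT1
  have hT1m : Measurable T1 := Measurable.indicator (by fun_prop) (hDm.prod hDm)
  set T2 : Heis n × Heis n → ℝ≥0∞ :=
    fun x => ENNReal.ofReal (|φ x.1 - φ x.2| ^ p / kern q α x.1 x.2) with hT2
  have hT2m : Measurable T2 := by fun_prop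
  have I1 : ∫⁻ a, ∫⁻ b, T1 (a, b) < ⊤ := by
    refine lt_of_eq_of_lt ?_ hfs
    unfold gagSem
    rw [← lintegral_indicator hDm]
    refine lintegral_congr fun a => ?_
    by_cases ha : a ∈ D
    · rw [Set.indicator_of_mem ha, ← lintegral_indicator hDm]
      refine lintegral_congr fun b => ?_
      by_cases hb : b ∈ D
      · rw [hT1, Set.indicator_of_mem hb, Set.indicator_of_mem (Set.mk_mem_prod ha hb)]; rfl
      · rw [hT1, Set.indicator_of_notMem hb, Set.indicator_of_notMem fun h => hb h.2]
    · rw [Set.indicator_of_notMem ha, ← lintegral_zero]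
      refine lintegral_congr fun b => ?_
      rw [hT1, Set.indicator_of_notMem fun h => ha h.1]
  have I2 : ∫⁻ a, ∫⁻ b, T2 (a, b) < ⊤ := by
    have := hφ.2.2
    simp only [gagSem, Measure.restrict_univ] at this
    exact this
  have hTT : Measurable fun x => T1 x + T2 x := hT1m.add hT2m
  have hMs : Measurable fun x : Heis n × Heis n =>
      offMaj p q α f φ x.1 x.2 + offMaj p q α f φ x.2 x.1 := hM.add hM'
  have hMM := hMs.const_mul (ENNReal.ofReal (2 ^ (p - 1) * C))
  calc _ ≤ ∫⁻ a, ∫⁻ b, (T1 (a, b) + T2 (a, b) + ENNReal.ofReal (2 ^ (p - 1) * C) *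
          (offMaj p q α f φ a b + offMaj p q α f φ b a)) :=
        lintegral_mono fun a => lintegral_mono fun b =>
          pointwise_bound hp1 hC f φ K D hKD hφK hker' a b
    _ = ∫⁻ x : Heis n × Heis n, (T1 x + T2 x + ENNReal.ofReal (2 ^ (p - 1) * C) *
          (offMaj p q α f φ x.1 x.2 + offMaj p q α f φ x.2 x.1)) :=
        (lintegral_prod _ (hTT.add hMM).aemeasurable).symm
    _ = (∫⁻ x, T1 x) + (∫⁻ x, T2 x) + ENNReal.ofReal (2 ^ (p - 1) * C) *
          ((∫⁻ x : Heis n × Heis n, offMaj p q α f φ x.1 x.2) +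
            ∫⁻ x : Heis n × Heis n, offMaj p q α f φ x.2 x.1) := by
        rw [lintegral_add_left hTT, lintegral_add_left hT1m,
          lintegral_const_mul _ hMs, lintegral_add_left hM]
    _ < ⊤ := by
        have J1 : ∫⁻ x, T1 x < ⊤ := by
          rw [Measure.volume_eq_prod, lintegral_prod _ hT1m.aemeasurable]; exact I1
        have J2 : ∫⁻ x, T2 x < ⊤ := by
          rw [Measure.volume_eq_prod, lintegral_prod _ hT2m.aemeasurable]; exact I2
        have J3 : ∫⁻ x : Heis n × Heis n, offMaj p q α f φ x.1 x.2 < ⊤ := by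
          rw [Measure.volume_eq_prod, lintegral_prod _ hM.aemeasurable]; exact IM
        have J4 : ∫⁻ x : Heis n × Heis n, offMaj p q α f φ x.2 x.1 < ⊤ := by
          rw [Measure.volume_eq_prod, lintegral_prod _ hM'.aemeasurable]; exact IM'
        exact ENNReal.add_lt_top.2 ⟨ENNReal.add_lt_top.2 ⟨J1, J2⟩,
          ENNReal.mul_lt_top ENNReal.ofReal_lt_top (ENNReal.add_lt_top.2 ⟨J3, J4⟩)⟩
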